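/- For all 1 ≤ i,j,k,l ≤ 3, the second derivatives of the Coulomb kernel matrix have zero spherical average: ∫_{S²} |z|³ ∂_k ∂_l a_{ij}(z) dσ(z) = 0, where the integral is taken over the unit sphere S² ⊂ ℝ³ with its surface measure σ. -/

import Mathlib

open MeasureTheory

/-- The Coulomb kernel matrix `a_{ij}(z) = (1/|z|)(δ_{ij} − z_i z_j/|z|²)`. -/
noncomputable def aK (i j : Fin 3) (z : EuclideanSpace ℝ (Fin 3)) : ℝ :=
  (1 / ‖z‖) * ((if i = j then (1 : ℝ) else 0) - z i * z j / ‖z‖ ^ 2)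

/-- The second partial derivative `∂_k ∂_l a_{ij}`. -/
noncomputable def d2aK (i j k l : Fin 3) (z : EuclideanSpace ℝ (Fin 3)) : ℝ :=
  fderiv ℝ (fun w => fderiv ℝ (aK i j) w (EuclideanSpace.single l 1)) z
    (EuclideanSpace.single k 1)

abbrev E3 := EuclideanSpace ℝ (Fin 3)

noncomputable def sphPar (p : ℝ × ℝ) : E3 :=
  WithLp.toLp 2 ![Real.sin p.1 * Real.cos p.2, Real.sin p.1 * Real.sin p.2, Real.cos p.1]

lemma sphPar_contDiff : ContDiff ℝ 1 sphPar := by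
  rw [contDiff_euclidean]
  intro i
  fin_cases i <;> simp [sphPar] <;> fun_prop

lemma sphere_sub : Metric.sphere (0 : E3) 1 ⊆
    sphPar '' (Set.Icc (-Real.pi) Real.pi ×ˢ Set.Icc (-Real.pi) Real.pi) := by
  intro z hz
  have h1 : ‖z‖ = 1 := by simpa using hz
  have h2 : z 0 ^ 2 + z 1 ^ 2 + z 2 ^ 2 = 1 := by
    have := EuclideanSpace.norm_sq_eq z
    rw [h1] at this
    simp [Fin.sum_univ_three] at this
    linarith
  have hn : ‖(⟨z 0, z 1⟩ : ℂ)‖ = √(1 - z 2 ^ 2) := by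
    rw [Complex.norm_def, Complex.normSq_mk]
    congr 1
    linarith
  have hz2 : -1 ≤ z 2 ∧ z 2 ≤ 1 := by
    constructor <;> nlinarith [sq_nonneg (z 0), sq_nonneg (z 1)]
  have hc := Complex.norm_mul_cos_arg (⟨z 0, z 1⟩ : ℂ)
  have hs := Complex.norm_mul_sin_arg (⟨z 0, z 1⟩ : ℂ)
  rw [hn] at hc hs
  refine ⟨(Real.arccos (z 2), Complex.arg ⟨z 0, z 1⟩), ?_, ?_⟩
  · refine ⟨⟨?_, Real.arccos_le_pi _⟩, ⟨(Complex.neg_pi_lt_arg _).le, Complex.arg_le_pi _⟩⟩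
    linarith [Real.arccos_nonneg (z 2), Real.pi_pos]
  · ext i
    fin_cases i
    · simpa [sphPar, Real.sin_arccos] using hc
    · simpa [sphPar, Real.sin_arccos] using hs
    · simpa [sphPar] using Real.cos_arccos hz2.1 hz2.2

lemma sphere_finite : μH[2] (Metric.sphere (0 : E3) 1) ≠ ⊤ := by
  have hK : IsCompact (Set.Icc (-Real.pi) Real.pi ×ˢ Set.Icc (-Real.pi) Real.pi) :=
    isCompact_Icc.prod isCompact_Icc
  obtain ⟨K, hL⟩ := (sphPar_contDiff.locallyLipschitz.locallyLipschitzOn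
    (s := Set.Icc (-Real.pi) Real.pi ×ˢ Set.Icc (-Real.pi) Real.pi)).exists_lipschitzOnWith_of_compact hK
  have := hL.hausdorffMeasure_image_le (d := 2) (by norm_num)
  rw [hausdorffMeasure_prod_real] at this
  refine ne_top_of_le_ne_top ?_ ((measure_mono sphere_sub).trans this)
  exact ENNReal.mul_ne_top (ENNReal.rpow_ne_top_of_nonneg (by norm_num) (by simp))
    hK.measure_lt_top.ne

lemma sph_int {f : E3 → ℝ} (hf : Continuous f) :
    IntegrableOn f (Metric.sphere (0 : E3) 1) μH[2] :=
  hf.continuousOn.integrableOn_of_subset_isCompact (isCompact_sphere _ _)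
    Metric.isClosed_sphere.measurableSet subset_rfl sphere_finite

/-- Rotation invariance. -/
lemma sph_inv (e : E3 ≃ₗᵢ[ℝ] E3) (f : E3 → ℝ) :
    ∫ z in Metric.sphere (0 : E3) 1, f (e z) ∂μH[2] =
    ∫ z in Metric.sphere (0 : E3) 1, f z ∂μH[2] := by
  have := (e.toIsometryEquiv.measurePreserving_hausdorffMeasure 2).setIntegral_preimage_emb
    e.toHomeomorph.measurableEmbedding f (Metric.sphere (0 : E3) 1)
  rw [← this]
  congr 2
  ext z
  simp

noncomputable def momA : ℝ :=
  ∫ z in Metric.sphere (0 : E3) 1, (inner ℝ z (EuclideanSpace.single (0 : Fin 3) (1:ℝ))) ^ 4 ∂μH[2]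

lemma mom4 (v : E3) :
    ∫ z in Metric.sphere (0 : E3) 1, (inner ℝ z v) ^ 4 ∂μH[2] = momA * (inner ℝ v v) ^ 2 := by
  set w : E3 := ‖v‖ • EuclideanSpace.single (0 : Fin 3) (1:ℝ) with hw
  have hn : ‖v‖ = ‖w‖ := by simp [hw, norm_smul]
  have hr := Submodule.reflection_sub hn
  rw [← sph_inv (Submodule.reflection (Submodule.span ℝ {v - w})ᗮ), real_inner_self_eq_norm_sq,
    momA, ← integral_mul_const]
  congr 1
  ext z
  have : inner ℝ ((Submodule.reflection (Submodule.span ℝ {v - w})ᗮ) z) v = inner ℝ z w := by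
    have h3 := LinearIsometryEquiv.inner_map_map
      (Submodule.reflection (Submodule.span ℝ {v - w})ᗮ)
      ((Submodule.reflection (Submodule.span ℝ {v - w})ᗮ) z) v
    rw [Submodule.reflection_reflection, hr] at h3
    exact h3.symm
  rw [this, hw, inner_smul_right]
  ring

lemma mom4_pol (a b c d : E3) :
    ∫ z in Metric.sphere (0 : E3) 1, inner ℝ z a * inner ℝ z b * inner ℝ z c * inner ℝ z d ∂μH[2]
    = momA / 3 * (inner ℝ a b * inner ℝ c d + inner ℝ a c * inner ℝ b d
      + inner ℝ a d * inner ℝ b c) := by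
  have hi : ∀ v : E3, IntegrableOn (fun z : E3 => (inner ℝ z v : ℝ) ^ 4)
      (Metric.sphere (0 : E3) 1) μH[2] := fun v => sph_int (by fun_prop)
  have hp : ∀ z : E3, (inner ℝ z a * inner ℝ z b * inner ℝ z c * inner ℝ z d : ℝ) =
      ((((((((inner ℝ z (a + b + c + d)) ^ 4 - (inner ℝ z (a - b + c + d)) ^ 4)
      - (inner ℝ z (a + b - c + d)) ^ 4) - (inner ℝ z (a + b + c - d)) ^ 4)
      + (inner ℝ z (a - b - c + d)) ^ 4) + (inner ℝ z (a - b + c - d)) ^ 4)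
      + (inner ℝ z (a + b - c - d)) ^ 4) - (inner ℝ z (a - b - c - d)) ^ 4) * (1 / 192) := by
    intro z
    simp only [inner_add_right, inner_sub_right]
    ring
  simp_rw [hp]
  rw [integral_mul_const, integral_sub, integral_add, integral_add, integral_add, integral_sub,
    integral_sub, integral_sub]
  · simp only [mom4]
    simp only [inner_add_right, inner_sub_right, inner_add_left, inner_sub_left]
    rw [real_inner_comm a b, real_inner_comm a c, real_inner_comm a d, real_inner_comm b c,
      real_inner_comm b d, real_inner_comm c d]
    ring
  all_goals exact sph_int (by fun_prop)

noncomputable def del (i j : Fin 3) : ℝ := if i = j then 1 else 0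

lemma M4 (i j k l : Fin 3) :
    ∫ z in Metric.sphere (0 : E3) 1, z i * z j * z k * z l ∂μH[2]
    = momA / 3 * (del i j * del k l + del i k * del j l + del i l * del j k) := by
  have := mom4_pol (EuclideanSpace.single i 1) (EuclideanSpace.single j 1)
    (EuclideanSpace.single k 1) (EuclideanSpace.single l 1)
  simpa [EuclideanSpace.inner_single_right, del, PiLp.single_apply, eq_comm] using this

lemma sph_one {z : E3} (hz : z ∈ Metric.sphere (0 : E3) 1) :
    z 0 * z 0 + z 1 * z 1 + z 2 * z 2 = 1 := by
  have h1 : ‖z‖ = 1 := by simpa using hz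
  have := EuclideanSpace.norm_sq_eq z
  rw [h1] at this
  simp [Fin.sum_univ_three] at this
  linarith

lemma M2 (i j : Fin 3) :
    ∫ z in Metric.sphere (0 : E3) 1, z i * z j ∂μH[2] = momA / 3 * (5 * del i j) := by
  have : ∫ z in Metric.sphere (0 : E3) 1, z i * z j ∂μH[2] =
      ∫ z in Metric.sphere (0 : E3) 1, (z i * z j * z 0 * z 0 + z i * z j * z 1 * z 1
        + z i * z j * z 2 * z 2) ∂μH[2] := by
    refine setIntegral_congr_fun Metric.isClosed_sphere.measurableSet fun z hz => ?_
    have := sph_one hz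
    linear_combination (- z i * z j) * this
  rw [this, integral_add, integral_add]
  · simp only [M4]
    have e : ∀ i j : Fin 3, del i 0 * del j 0 + del i 1 * del j 1 + del i 2 * del j 2
        = del i j := by
      intro i j
      fin_cases i <;> fin_cases j <;> simp [del, Fin.ext_iff]
    have e0 : ∀ i : Fin 3, del i i = 1 := fun i => by simp [del]
    rw [e0, e0, e0]
    linear_combination (2 * momA / 3) * e i j
  all_goals exact sph_int (by fun_prop)

lemma M0 : ∫ _z in Metric.sphere (0 : E3) 1, (1:ℝ) ∂μH[2] = momA / 3 * 15 := by
  have : ∫ _z in Metric.sphere (0 : E3) 1, (1:ℝ) ∂μH[2] =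
      ∫ z in Metric.sphere (0 : E3) 1, (z 0 * z 0 + z 1 * z 1 + z 2 * z 2) ∂μH[2] := by
    refine setIntegral_congr_fun Metric.isClosed_sphere.measurableSet fun z hz => ?_
    exact (sph_one hz).symm
  rw [this, integral_add, integral_add]
  · simp only [M2, del]
    norm_num
    ring
  all_goals exact sph_int (by fun_prop)

lemma pw_deriv (n : ℕ) {z : E3} (hz : z ≠ 0) :
    HasFDerivAt (fun w : E3 => (‖w‖ ^ n)⁻¹) ((-(n * (‖z‖ ^ (n + 2))⁻¹)) • innerSL ℝ z) z := by
  have h0 : ‖z‖ ≠ 0 := norm_ne_zero_iff.2 hz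
  have h1 : HasFDerivAt (fun w : E3 => ‖w‖) (‖z‖⁻¹ • innerSL ℝ z) z := by
    have := (hasStrictFDerivAt_norm_sq z).hasFDerivAt.sqrt (by positivity)
    simp only [Real.sqrt_sq (norm_nonneg _)] at this
    have e : (‖z‖⁻¹ • innerSL ℝ z : E3 →L[ℝ] ℝ) = (1 / (2 * ‖z‖)) • 2 • innerSL ℝ z := by
      ext v
      simp only [smul_apply, smul_eq_mul, nsmul_eq_mul]
      push_cast
      field_simp
    rw [e]
    exact this
  have h2 : HasDerivAt (fun x : ℝ => (x ^ n)⁻¹) (-(n * ‖z‖ ^ (n - 1)) / (‖z‖ ^ n) ^ 2) ‖z‖ :=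
    (hasDerivAt_pow n ‖z‖).fun_inv (pow_ne_zero _ h0)
  have h3 := h2.comp_hasFDerivAt z h1
  rw [smul_smul] at h3
  have e : -(n * (‖z‖ ^ (n + 2))⁻¹) = -(n * ‖z‖ ^ (n - 1)) / (‖z‖ ^ n) ^ 2 * ‖z‖⁻¹ := ?_
  · rw [e]
    exact h3
  rcases n with _ | n
  · simp
  · simp only [Nat.add_sub_cancel]
    field_simp
    ring

lemma co_deriv (i : Fin 3) (z : E3) :
    HasFDerivAt (fun w : E3 => w i) (EuclideanSpace.proj i : E3 →L[ℝ] ℝ) z :=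
  (EuclideanSpace.proj i : E3 →L[ℝ] ℝ).hasFDerivAt

lemma proj_ev (i l : Fin 3) :
    (EuclideanSpace.proj i : E3 →L[ℝ] ℝ) (EuclideanSpace.single l 1) = del i l := by
  simp [del, PiLp.single_apply]

lemma inner_ev (z : E3) (l : Fin 3) : innerSL ℝ z (EuclideanSpace.single l 1) = z l := by
  simp [EuclideanSpace.inner_single_right]

lemma aK_eq (i j : Fin 3) : aK i j = fun z => del i j * (‖z‖ ^ 1)⁻¹ - z i * z j * (‖z‖ ^ 3)⁻¹ := by
  ext z
  by_cases h : ‖z‖ = 0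
  · simp [aK, h]
  · simp only [aK, del]
    field_simp

lemma d1 (i j l : Fin 3) {z : E3} (hz : z ≠ 0) :
    fderiv ℝ (aK i j) z (EuclideanSpace.single l 1) =
    -(del i j * z l * (‖z‖ ^ 3)⁻¹) - (del i l * z j + z i * del j l) * (‖z‖ ^ 3)⁻¹
      + 3 * (z i * z j * z l) * (‖z‖ ^ 5)⁻¹ := by
  have h := ((pw_deriv 1 hz).const_mul (del i j)).fun_sub
    (((co_deriv i z).fun_mul (co_deriv j z)).fun_mul (pw_deriv 3 hz))
  rw [aK_eq, h.fderiv]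
  simp only [add_apply, sub_apply, neg_apply, smul_apply, smul_eq_mul, proj_ev, inner_ev]
  push_cast
  ring

lemma d2 (i j k l : Fin 3) {z : E3} (hz : z ≠ 0) :
    d2aK i j k l z =
    -(del i j * del k l * (‖z‖ ^ 3)⁻¹) + 3 * del i j * (z k * z l) * (‖z‖ ^ 5)⁻¹
    - (del i l * del j k + del i k * del j l) * (‖z‖ ^ 3)⁻¹
    + 3 * (del i l * (z j * z k) + del j l * (z i * z k)) * (‖z‖ ^ 5)⁻¹
    + 3 * (del i k * (z j * z l) + del j k * (z i * z l) + del k l * (z i * z j)) * (‖z‖ ^ 5)⁻¹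
    - 15 * (z i * z j * z k * z l) * (‖z‖ ^ 7)⁻¹ := by
  have he : (fun w => fderiv ℝ (aK i j) w (EuclideanSpace.single l 1)) =ᶠ[nhds z]
      fun z => -(del i j * z l * (‖z‖ ^ 3)⁻¹) - (del i l * z j + z i * del j l) * (‖z‖ ^ 3)⁻¹
      + 3 * (z i * z j * z l) * (‖z‖ ^ 5)⁻¹ := by
    filter_upwards [isOpen_ne.mem_nhds hz] with w hw using d1 i j l hw
  have h := (((((co_deriv l z).const_mul (del i j)).fun_mul (pw_deriv 3 hz)).fun_neg).fun_sub
    ((((co_deriv j z).const_mul (del i l)).fun_add ((co_deriv i z).mul_const (del j l))).fun_mul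
      (pw_deriv 3 hz))).fun_add
    (((((co_deriv i z).fun_mul (co_deriv j z)).fun_mul (co_deriv l z)).const_mul 3).fun_mul
      (pw_deriv 5 hz))
  rw [d2aK, he.fderiv_eq, h.fderiv]
  have e1 : del k l = del l k := by simp [del, eq_comm]
  rw [e1]
  simp only [add_apply, sub_apply, neg_apply, smul_apply, smul_eq_mul, proj_ev, inner_ev]
  push_cast
  ring

/-- The second derivatives of the Coulomb kernel have zero spherical average,
with respect to the surface (2-dimensional Hausdorff) measure on the unit sphere. -/
theorem second_deriv_kernel_spherical_average_zero (i j k l : Fin 3) :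
    ∫ z in Metric.sphere (0 : EuclideanSpace ℝ (Fin 3)) 1,
      ‖z‖ ^ 3 * d2aK i j k l z ∂(μH[2]) = 0 := by
  have : ∫ z in Metric.sphere (0 : E3) 1, ‖z‖ ^ 3 * d2aK i j k l z ∂(μH[2]) =
      ∫ z in Metric.sphere (0 : E3) 1,
      ((-(del i j * del k l + del i l * del j k + del i k * del j l)) * 1
      + 3 * del i j * (z k * z l) + 3 * del i l * (z j * z k) + 3 * del j l * (z i * z k)
      + 3 * del i k * (z j * z l) + 3 * del j k * (z i * z l) + 3 * del k l * (z i * z j)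
      - 15 * (z i * z j * z k * z l)) ∂μH[2] := by
    refine setIntegral_congr_fun Metric.isClosed_sphere.measurableSet fun z hz => ?_
    have h1 : ‖z‖ = 1 := by simpa using hz
    have h0 : z ≠ 0 := by
      rintro rfl
      simp at h1
    simp only [d2 i j k l h0, h1]
    ring
  rw [this, integral_sub, integral_add, integral_add, integral_add, integral_add, integral_add,
    integral_add]
  · simp only [integral_const_mul, M4, M2, M0]
    ring
  all_goals exact sph_int (by fun_prop)
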